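/- arXiv:2304.03380 — 4 statements merged into one kernel-verified Lean document; each statement's English description precedes it below -/
import Mathlib

section
/- If P and Q are two strictly positive probability distributions on the same finite product ∏_{V∈𝒱} X_V, and for a fixed non-decreasing complete sequence of marginals M_1, …, M_k = 𝒱 the hierarchical complete marginal log-linear parameters of P and Q coincide, i.e. λ^{M(E)}_E(P)(e) = λ^{M(E)}_E(Q)(e) for every effect E ⊆ 𝒱 and every cell e, then P = Q. (The hierarchical complete marginal log-linear parameters thus constitute a parameterization of the strictly positive distributions.) -/
/-!
The marginals of `P` and `Q` on `M i` are shown to agree by strong induction on `i`; the last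
marginal is the whole distribution.

Write `p`, `q` for the marginals on `M i`. The recursive definition of the parameters at the effect
`E = M i` is the log-linear expansion `log p(m) = ∑_{F ⊆ M i} λ_F(m|_F)`
(`log_marginal_eq_sum`), so `log p - log q = ∑_{F ⊆ M i} d_F(m|_F)`, where `d_F` is the difference
of the parameters of `P` and `Q`. If `F` first occurs at `M i`, then `d_F = 0` by hypothesis.
Otherwise `F ⊆ M j` for some `j < i`, so `p` and `q` have the same `F`-marginal and `d_F(m|_F)` has
the same expectation under both. Hence `∑_m (p - q)(log p - log q) = 0`. This is the symmetrised
Kullback–Leibler divergence, whose summands are nonnegative and vanish only where `p = q`, by strict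
monotonicity of the logarithm.
-/

open Finset

abbrev Cell {V : Type} (X : V → Type) (E : Finset V) : Type := (w : {x // x ∈ E}) → X w.1

def restrictCell {V : Type} {X : V → Type} {E F : Finset V} (h : F ⊆ E) (e : Cell X E) :
    Cell X F := fun w => e ⟨w.1, h w.2⟩

variable {V : Type} [Fintype V] [DecidableEq V]

/-- The marginal of `P` on the subset `M` of variables. -/
noncomputable def marginal (X : V → Type) [∀ v, Fintype (X v)] [∀ v, DecidableEq (X v)]
    (P : (∀ v, X v) → ℝ) (M : Finset V) (m : Cell X M) : ℝ :=
  ∑ v : (∀ v, X v), if ∀ w : {x // x ∈ M}, v w.1 = m w then P v else 0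

/-- The log-linear parameter of effect `E` computed in the marginal `M`. -/
noncomputable def mllp (X : V → Type) [∀ v, Fintype (X v)] [∀ v, DecidableEq (X v)]
    (P : (∀ v, X v) → ℝ) (M : Finset V) (E : Finset V) (e : Cell X E) : ℝ :=
  (Fintype.card (Cell X (M \ E)) : ℝ)⁻¹ *
    ∑ m : Cell X M,
      (if ∀ (w : V) (hE : w ∈ E) (hM : w ∈ M), m ⟨w, hM⟩ = e ⟨w, hE⟩
       then Real.log (marginal X P M m) else 0)
  - ∑ F ∈ (E.powerset.erase E).attach,
      mllp X P M F.1 (fun w => e ⟨w.1, Finset.mem_powerset.mp (Finset.mem_of_mem_erase F.2) w.2⟩)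
termination_by E.card
decreasing_by
  have h := F.2
  rw [Finset.mem_erase, Finset.mem_powerset] at h
  exact Finset.card_lt_card (HasSubset.Subset.ssubset_of_ne h.2 h.1)

section Helpers

variable (X : V → Type) [∀ v, Fintype (X v)] [∀ v, DecidableEq (X v)]

lemma sum_marginal_mul (P : (∀ v, X v) → ℝ) (M : Finset V) (g : Cell X M → ℝ) :
    ∑ m, marginal X P M m * g m = ∑ v, P v * g (fun w => v w.1) := by
  simp only [marginal, Finset.sum_mul]
  rw [Finset.sum_comm]
  refine Finset.sum_congr rfl fun v _ => ?_
  rw [Finset.sum_eq_single (fun w => v w.1 : Cell X M)]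
  · simp
  · intro m _ hm
    rw [if_neg, zero_mul]
    exact fun h => hm (funext fun w => (h w).symm)
  · simp

lemma marginal_pos (hX : ∀ v, 2 ≤ Fintype.card (X v)) (P : (∀ v, X v) → ℝ)
    (hP : ∀ v, 0 < P v) (M : Finset V) (m : Cell X M) : 0 < marginal X P M m := by
  have hne : ∀ v, Nonempty (X v) := fun v =>
    Fintype.card_pos_iff.mp (lt_of_lt_of_le two_pos (hX v))
  refine Finset.sum_pos' (fun v _ => ?_)
    ⟨fun v => if h : v ∈ M then m ⟨v, h⟩ else (hne v).some, Finset.mem_univ _, ?_⟩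
  · split_ifs
    · exact (hP v).le
    · exact le_rfl
  · rw [if_pos]
    · exact hP _
    · intro w
      simp

lemma marginal_of_eq_univ (P : (∀ v, X v) → ℝ) (M : Finset V) (hM : M = Finset.univ)
    (v : ∀ v, X v) : marginal X P M (fun w => v w.1) = P v := by
  subst hM
  rw [marginal, Finset.sum_eq_single v]
  · simp
  · intro u _ hu
    rw [if_neg]
    exact fun h => hu (funext fun w => h ⟨w, Finset.mem_univ w⟩)
  · simp

/-- The log-linear expansion of a marginal: the defining recursion of `mllp` at the effect `E = M`,
where the average runs over the single cell `m`. The value `0` for `F` not contained in `M` only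
makes the summand total. -/
lemma log_marginal_eq_sum (P : (∀ v, X v) → ℝ) (M : Finset V) (m : Cell X M) :
    Real.log (marginal X P M m) =
      ∑ F ∈ M.powerset, if h : F ⊆ M then mllp X P M F (restrictCell h m) else 0 := by
  have hrec : mllp X P M M m = Real.log (marginal X P M m) -
      ∑ F ∈ M.powerset.erase M, if h : F ⊆ M then mllp X P M F (restrictCell h m) else 0 := by
    rw [mllp]
    congr 1
    · have hcard : Fintype.card (Cell X (M \ M)) = 1 := by
        have : IsEmpty {x // x ∈ M \ M} := ⟨fun x => by simpa using x.2⟩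
        exact Fintype.card_eq_one_iff.mpr ⟨fun w => isEmptyElim w, fun y => funext fun w =>
          isEmptyElim w⟩
      rw [hcard, Finset.sum_eq_single m]
      · simp
      · intro n _ hn
        rw [if_neg]
        exact fun h => hn (funext fun w => h w.1 w.2 w.2)
      · simp
    · rw [← Finset.sum_attach (M.powerset.erase M)]
      refine Finset.sum_congr rfl fun F _ => ?_
      rw [dif_pos (Finset.mem_powerset.mp (Finset.mem_of_mem_erase F.2))]
      rfl
  rw [← Finset.add_sum_erase _ _ (Finset.mem_powerset_self M), dif_pos (Finset.Subset.refl M)]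
  have hself : restrictCell (Finset.Subset.refl M) m = m := rfl
  rw [hself, hrec]
  ring

/-- Equality of the marginals on `N` makes the expectations of functions of a smaller set of
variables `F ⊆ N` agree. -/
lemma sum_mul_eq_of_marginal_eq (P Q : (∀ v, X v) → ℝ) {N F : Finset V} (hF : F ⊆ N)
    (hPQ : marginal X P N = marginal X Q N) (d : Cell X F → ℝ) :
    ∑ v, P v * d (fun w => v w.1) = ∑ v, Q v * d (fun w => v w.1) := by
  have hP := sum_marginal_mul X P N (fun n => d (restrictCell hF n))
  have hQ := sum_marginal_mul X Q N (fun n => d (restrictCell hF n))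
  rw [hPQ] at hP
  exact hP.symm.trans hQ

lemma sub_mul_log_sub_nonneg {a b : ℝ} (ha : 0 < a) (hb : 0 < b) :
    0 ≤ (a - b) * (Real.log a - Real.log b) := by
  rcases le_total a b with h | h
  · exact mul_nonneg_of_nonpos_of_nonpos (sub_nonpos.mpr h)
      (sub_nonpos.mpr (Real.log_le_log ha h))
  · exact mul_nonneg (sub_nonneg.mpr h) (sub_nonneg.mpr (Real.log_le_log hb h))

/-- Uniqueness in the mixed parameterization of one marginal `M`: each effect `F ⊆ M` is pinned
either by its log-linear parameter in `M` or by the marginal on some `N ⊇ F`. -/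
lemma marginal_eq_of_mixed (hX : ∀ v, 2 ≤ Fintype.card (X v)) (P Q : (∀ v, X v) → ℝ)
    (hP : ∀ v, 0 < P v) (hQ : ∀ v, 0 < Q v) (M : Finset V)
    (hmix : ∀ F ⊆ M, (∀ e, mllp X P M F e = mllp X Q M F e) ∨
      ∃ N, F ⊆ N ∧ marginal X P N = marginal X Q N) :
    marginal X P M = marginal X Q M := by
  have hzero : ∑ m, (marginal X P M m - marginal X Q M m) *
      (Real.log (marginal X P M m) - Real.log (marginal X Q M m)) = 0 := by
    simp only [sub_mul, Finset.sum_sub_distrib]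
    rw [sum_marginal_mul X P M
        (fun m => Real.log (marginal X P M m) - Real.log (marginal X Q M m)),
      sum_marginal_mul X Q M
        (fun m => Real.log (marginal X P M m) - Real.log (marginal X Q M m)), sub_eq_zero]
    simp only [log_marginal_eq_sum, ← Finset.sum_sub_distrib, Finset.mul_sum]
    rw [Finset.sum_comm, Finset.sum_comm (s := Finset.univ)]
    refine Finset.sum_congr rfl fun F hF => ?_
    have hFM := Finset.mem_powerset.mp hF
    simp only [dif_pos hFM]
    rcases hmix F hFM with h | ⟨N, hFN, hN⟩
    · simp [h]
    · exact sum_mul_eq_of_marginal_eq X P Q hFN hN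
        (fun e => mllp X P M F e - mllp X Q M F e)
  have hpos := marginal_pos X hX P hP M
  have hqos := marginal_pos X hX Q hQ M
  rw [Finset.sum_eq_zero_iff_of_nonneg
    fun m _ => sub_mul_log_sub_nonneg (hpos m) (hqos m)] at hzero
  funext m
  rcases mul_eq_zero.mp (hzero m (Finset.mem_univ m)) with h | h
  · exact sub_eq_zero.mp h
  · exact Real.log_injOn_pos (hpos m) (hqos m) (sub_eq_zero.mp h)

end Helpers

/-- The hierarchical complete marginal log-linear parameters constitute a
parameterization of the strictly positive distributions: if two strictly positive probability
distributions have the same parameters `λ^{M(E)}_E(e)` for every effect `E` and cell `e`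
(with `M(E)` the first marginal in a fixed non-decreasing complete sequence containing `E`),
then the two distributions are equal. -/
theorem marginal_loglinear_parameterization
    {V : Type} [Fintype V] [DecidableEq V]
    (X : V → Type) [∀ v, Fintype (X v)] [∀ v, DecidableEq (X v)]
    (hX : ∀ v, 2 ≤ Fintype.card (X v))
    (k : ℕ) (M : Fin (k + 1) → Finset V)
    (hnd : ∀ i j : Fin (k + 1), i < j → ¬ M j ⊆ M i)
    (hcomp : M (Fin.last k) = Finset.univ)
    (idx : Finset V → Fin (k + 1))
    (hidx : ∀ E : Finset V, E ⊆ M (idx E) ∧ ∀ j : Fin (k + 1), j < idx E → ¬ E ⊆ M j)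
    (P Q : (∀ v, X v) → ℝ)
    (hPpos : ∀ v, 0 < P v) (hPsum : ∑ v, P v = 1)
    (hQpos : ∀ v, 0 < Q v) (hQsum : ∑ v, Q v = 1)
    (hparam : ∀ (E : Finset V) (e : Cell X E),
      mllp X P (M (idx E)) E e = mllp X Q (M (idx E)) E e) :
    P = Q := by
  have hmarg : ∀ i, marginal X P (M i) = marginal X Q (M i) := by
    intro i
    induction i using WellFoundedLT.induction with
    | ind i ih =>
      refine marginal_eq_of_mixed X hX P Q hPpos hQpos (M i) fun F hF => ?_
      rcases lt_trichotomy (idx F) i with h | h | h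
      · exact Or.inr ⟨M (idx F), (hidx F).1, ih _ h⟩
      · left
        subst h
        exact hparam F
      · exact absurd hF ((hidx F).2 i h)
  funext v
  rw [← marginal_of_eq_univ X P _ hcomp v, hmarg, marginal_of_eq_univ X Q _ hcomp v]
end

section
/- Let M, N ⊆ 𝒱 be two marginals and E a nonempty effect with E ⊆ M ∩ N. Regard, for each cell e of E, the quantities λ^M_E(e) and λ^N_E(e) as functions of the vector p = (p(v))_{v ∈ ∏_{V∈𝒱} X_V} of cell probabilities, defined on the open set of strictly positive vectors. Then for every cell w of the full table, the partial derivatives ∂λ^M_E(e)/∂p(w) and ∂λ^N_E(e)/∂p(w), evaluated at the uniform distribution (p(v) = 1/|∏_{V∈𝒱} X_V| for all v), are equal. -/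
/-!
At the uniform distribution `p_M(m) = 1 / |X_M|`, so `∂ log p_M(m) / ∂p(w)` is `|X_M|` when `m` is
the restriction of `w` to `M`, and `0` otherwise. Averaging over the cells `m` of `M` that agree with
`e` on `E ⊆ M` gives `|X_M| / |X_{M \ E}| = |X_E|` if `w` restricts to `e`, and `0` otherwise: a value
that does not depend on `M` (`hasDerivAt_average`). Since `λ^M_E(e)` is this average minus the
parameters of the proper subsets of `E`, induction on `|E|` shows that its derivative does not depend
on `M` either (`exists_hasDerivAt_mllp`).
-/

open Finset

variable {V : Type} [Fintype V] [DecidableEq V]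

/-- The distribution that is uniform except for the value `t` at the cell `w`. -/
noncomputable abbrev perturbedUniform (X : V → Type) [∀ v, Fintype (X v)] [∀ v, DecidableEq (X v)]
    (w : ∀ v, X v) (t : ℝ) : (∀ v, X v) → ℝ :=
  Function.update (fun _ : ∀ v, X v => (Fintype.card (∀ v, X v) : ℝ)⁻¹) w t

lemma card_cell (X : V → Type) [∀ v, Fintype (X v)] (M : Finset V) :
    Fintype.card (Cell X M) = ∏ v ∈ M, Fintype.card (X v) := by
  rw [Fintype.card_pi]
  exact Finset.prod_coe_sort M (fun v => Fintype.card (X v))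

lemma card_extensions_mul (X : V → Type) [∀ v, Fintype (X v)] [∀ v, DecidableEq (X v)]
    (M : Finset V) (m : Cell X M) :
    #{v : ∀ v, X v | ∀ u : {x // x ∈ M}, v u.1 = m u} * Fintype.card (Cell X M) =
      Fintype.card (∀ v, X v) := by
  have h : ({v : ∀ v, X v | ∀ u : {x // x ∈ M}, v u.1 = m u} : Finset (∀ v, X v)) =
      Fintype.piFinset (fun v => if h : v ∈ M then {m ⟨v, h⟩} else Finset.univ) := by
    ext v
    simp only [Finset.mem_filter, Finset.mem_univ, true_and, Fintype.mem_piFinset, Subtype.forall]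
    refine forall_congr' fun a => ?_
    by_cases ha : a ∈ M <;> simp [ha]
  rw [h, Fintype.card_piFinset, card_cell, Fintype.card_pi,
    ← Finset.prod_compl_mul_prod M (fun v => Fintype.card (X v)),
    ← Finset.prod_compl_mul_prod M
      (fun v => #(if h : v ∈ M then {m ⟨v, h⟩} else Finset.univ : Finset (X v)))]
  have h1 : ∏ v ∈ M, #(if h : v ∈ M then {m ⟨v, h⟩} else Finset.univ : Finset (X v)) = 1 :=
    Finset.prod_eq_one fun v hv => by simp [hv]
  have h2 : ∏ v ∈ Mᶜ, #(if h : v ∈ M then {m ⟨v, h⟩} else Finset.univ : Finset (X v)) =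
      ∏ v ∈ Mᶜ, Fintype.card (X v) :=
    Finset.prod_congr rfl fun v hv => by simp [Finset.mem_compl.mp hv]
  rw [h1, h2, mul_one]

lemma hasDerivAt_log_marginal (X : V → Type) [∀ v, Fintype (X v)] [∀ v, DecidableEq (X v)]
    (w : ∀ v, X v) (M : Finset V) (m : Cell X M) :
    HasDerivAt (fun t : ℝ => Real.log (marginal X (perturbedUniform X w t) M m))
      (if (fun u : {x // x ∈ M} => w u.1) = m then (Fintype.card (Cell X M) : ℝ) else 0)
      (Fintype.card (∀ v, X v) : ℝ)⁻¹ := by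
  have hT : (Fintype.card (∀ v, X v) : ℝ) ≠ 0 := by
    have : Nonempty (∀ v, X v) := ⟨w⟩
    exact_mod_cast Fintype.card_ne_zero
  have hc := card_extensions_mul X M m
  have hC : (Fintype.card (Cell X M) : ℝ) ≠ 0 := by
    have : Nonempty (Cell X M) := ⟨m⟩
    exact_mod_cast Fintype.card_ne_zero
  have hval : marginal X (perturbedUniform X w (Fintype.card (∀ v, X v) : ℝ)⁻¹) M m =
      (Fintype.card (Cell X M) : ℝ)⁻¹ := by
    have hu : perturbedUniform X w (Fintype.card (∀ v, X v) : ℝ)⁻¹ =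
        fun _ => (Fintype.card (∀ v, X v) : ℝ)⁻¹ := Function.update_eq_self w _
    rw [hu, marginal, ← Finset.sum_filter, Finset.sum_const, nsmul_eq_mul]
    have hc' : (#{v : ∀ v, X v | ∀ u : {x // x ∈ M}, v u.1 = m u} : ℝ) *
        Fintype.card (Cell X M) = Fintype.card (∀ v, X v) := by exact_mod_cast hc
    rw [← div_eq_mul_inv, inv_eq_one_div, div_eq_div_iff hT hC, hc', one_mul]
  have hd : HasDerivAt (fun t : ℝ => marginal X (perturbedUniform X w t) M m)
      (∑ v : (∀ v, X v), if ∀ u : {x // x ∈ M}, v u.1 = m u then (if v = w then (1 : ℝ) else 0)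
        else 0) (Fintype.card (∀ v, X v) : ℝ)⁻¹ := by
    unfold marginal
    refine HasDerivAt.fun_sum fun v _ => ?_
    split_ifs with h1 h2
    · subst h2
      simp only [perturbedUniform, Function.update_self]
      exact hasDerivAt_id _
    · simp only [perturbedUniform, Function.update_of_ne h2]
      exact hasDerivAt_const _ _
    · exact hasDerivAt_const _ _
  have hl := hd.log (by rw [hval]; exact inv_ne_zero hC)
  rw [hval] at hl
  refine hl.congr_deriv ?_
  have hs : (∑ v : (∀ v, X v), if ∀ u : {x // x ∈ M}, v u.1 = m u then
      (if v = w then (1 : ℝ) else 0) else 0) =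
      if (fun u : {x // x ∈ M} => w u.1) = m then (1 : ℝ) else 0 := by
    rw [Finset.sum_eq_single w]
    · simp [funext_iff]
    · intro v _ hv
      simp [hv]
    · simp
  rw [hs]
  split_ifs <;> simp

/-- The derivative of the average of `log p_M` over the cells extending `e`: the marginal `M` does
not occur in its value. -/
lemma hasDerivAt_average (X : V → Type) [∀ v, Fintype (X v)] [∀ v, DecidableEq (X v)]
    (w : ∀ v, X v) (M E : Finset V) (hEM : E ⊆ M) (e : Cell X E) :
    HasDerivAt (fun t : ℝ => (Fintype.card (Cell X (M \ E)) : ℝ)⁻¹ *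
      ∑ m : Cell X M,
        (if ∀ (u : V) (hE : u ∈ E) (hM : u ∈ M), m ⟨u, hM⟩ = e ⟨u, hE⟩
         then Real.log (marginal X (perturbedUniform X w t) M m) else 0))
      (if (fun u : {x // x ∈ E} => w u.1) = e then (Fintype.card (Cell X E) : ℝ) else 0)
      (Fintype.card (∀ v, X v) : ℝ)⁻¹ := by
  have hsum : HasDerivAt (fun t : ℝ => ∑ m : Cell X M,
        (if ∀ (u : V) (hE : u ∈ E) (hM : u ∈ M), m ⟨u, hM⟩ = e ⟨u, hE⟩
         then Real.log (marginal X (perturbedUniform X w t) M m) else 0))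
      (∑ m : Cell X M, (if ∀ (u : V) (hE : u ∈ E) (hM : u ∈ M), m ⟨u, hM⟩ = e ⟨u, hE⟩
         then (if (fun u : {x // x ∈ M} => w u.1) = m then (Fintype.card (Cell X M) : ℝ) else 0)
         else 0)) (Fintype.card (∀ v, X v) : ℝ)⁻¹ := by
    refine HasDerivAt.fun_sum fun m _ => ?_
    by_cases h : ∀ (u : V) (hE : u ∈ E) (hM : u ∈ M), m ⟨u, hM⟩ = e ⟨u, hE⟩
    · simp only [if_pos h]
      exact hasDerivAt_log_marginal X w M m
    · simp only [if_neg h]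
      exact hasDerivAt_const _ _
  refine (hsum.const_mul (Fintype.card (Cell X (M \ E)) : ℝ)⁻¹).congr_deriv ?_
  have hiff : (∀ (u : V) (hE : u ∈ E), u ∈ M → w u = e ⟨u, hE⟩) ↔
      (fun u : {x // x ∈ E} => w u.1) = e :=
    ⟨fun h => funext fun u => h u.1 u.2 (hEM u.2), fun h u hu _ => congrFun h ⟨u, hu⟩⟩
  have hC : (Fintype.card (Cell X (M \ E)) : ℝ) ≠ 0 := by
    have : Nonempty (Cell X (M \ E)) := ⟨fun u => w u.1⟩
    exact_mod_cast Fintype.card_ne_zero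
  have hcard : (Fintype.card (Cell X M) : ℝ) =
      Fintype.card (Cell X (M \ E)) * Fintype.card (Cell X E) := by
    rw [card_cell X M, card_cell X E, card_cell X (M \ E), ← Nat.cast_mul,
      Finset.prod_sdiff hEM]
  rw [Finset.sum_eq_single (fun u : {x // x ∈ M} => w u.1)]
  · simp only [hiff, if_true]
    split_ifs
    · rw [hcard, inv_mul_cancel_left₀ hC]
    · simp
  · intro m _ hm
    simp [hm.symm]
  · simp

/-- The partial derivative of `λ^M_E(e)` at the uniform distribution exists, with a value that is
the same for all marginals `M ⊇ E`. -/
lemma exists_hasDerivAt_mllp (X : V → Type) [∀ v, Fintype (X v)] [∀ v, DecidableEq (X v)]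
    (w : ∀ v, X v) (E : Finset V) (e : Cell X E) :
    ∃ d : ℝ, ∀ M : Finset V, E ⊆ M →
      HasDerivAt (fun t : ℝ => mllp X (perturbedUniform X w t) M E e) d
        (Fintype.card (∀ v, X v) : ℝ)⁻¹ := by
  induction E using Finset.strongInduction with
  | H E ih =>
    have hF : ∀ F : {F // F ∈ E.powerset.erase E}, F.1 ⊂ E := fun F => by
      have h := F.2
      rw [Finset.mem_erase, Finset.mem_powerset] at h
      exact h.2.ssubset_of_ne h.1
    choose d hd using fun F : {F // F ∈ E.powerset.erase E} =>
      ih F.1 (hF F) (fun u => e ⟨u.1, (hF F).1 u.2⟩)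
    refine ⟨(if (fun u : {x // x ∈ E} => w u.1) = e then (Fintype.card (Cell X E) : ℝ) else 0) -
      ∑ F ∈ (E.powerset.erase E).attach, d F, fun M hEM => ?_⟩
    have h := (hasDerivAt_average X w M E hEM e).sub
      (HasDerivAt.fun_sum (u := (E.powerset.erase E).attach)
        fun F _ => hd F M ((hF F).1.trans hEM))
    refine h.congr_of_eventuallyEq (Filter.Eventually.of_forall fun t => ?_)
    beta_reduce
    rw [mllp]
    rfl

/-- For two marginals `M`, `N` and a nonempty effect `E ⊆ M ∩ N`, the
partial derivatives of `λ^M_E(e)` and `λ^N_E(e)`, viewed as functions of the vector of cell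
probabilities and evaluated at the uniform distribution, are equal (for every cell `w` of the
full table and every cell `e` of `E`). The partial derivative with respect to the coordinate
`w` is the derivative of the map `t ↦ λ(p with coordinate w replaced by t)` at the uniform
value. -/
theorem mllp_partial_derivatives_equal_at_uniform
    {V : Type} [Fintype V] [DecidableEq V]
    (X : V → Type) [∀ v, Fintype (X v)] [∀ v, DecidableEq (X v)]
    (hX : ∀ v, 2 ≤ Fintype.card (X v))
    (M N E : Finset V) (hE : E.Nonempty) (hEMN : E ⊆ M ∩ N)
    (e : Cell X E) (w : ∀ v, X v) :
    deriv (fun t : ℝ =>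
        mllp X (Function.update (fun _ : ∀ v, X v => (Fintype.card (∀ v, X v) : ℝ)⁻¹) w t) M E e)
        (Fintype.card (∀ v, X v) : ℝ)⁻¹ =
      deriv (fun t : ℝ =>
        mllp X (Function.update (fun _ : ∀ v, X v => (Fintype.card (∀ v, X v) : ℝ)⁻¹) w t) N E e)
        (Fintype.card (∀ v, X v) : ℝ)⁻¹ := by
  obtain ⟨d, hd⟩ := exists_hasDerivAt_mllp X w E e
  have hM := hd M (hEMN.trans Finset.inter_subset_left)
  have hN := hd N (hEMN.trans Finset.inter_subset_right)
  exact hM.deriv.trans hN.deriv.symm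
end

section
/- Let all variables in 𝒱 be binary and let E ⊆ M ⊊ N ⊆ 𝒱 with E nonempty. Let Λ_{N|M} denote the vector of non-redundant values (λ^N_F)_{F ⊆ N, F ⊄ M}, of dimension d equal to the number of subsets F of N not contained in M. Then there exists an infinitely differentiable function f : ℝ^d → ℝ such that for every strictly positive distribution P on ∏_{V∈𝒱} X_V, λ^N_E(P) = λ^M_E(P) + f(Λ_{N|M}(P)). -/
/-!
For binary variables the log-linear parameters of a marginal `M` are the Walsh–Fourier
coefficients of the log-marginal: pulled back to `V → Fin 2`,
`λ^M_E = 2^{-|V|} ∑_v log P_M(v) W_E(v)` for `E ⊆ M` (`mllp_closed`), where `W_E` is the Walsh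
function `walsh E`. Conversely, `log P_N = ∑_{F ⊆ N} λ^N_F W_F` (`log_marg_expand`).

Up to a constant factor `P_M(v)` is the sum of `P_N(u)` over all `u` agreeing with `v` on `M`
(`marg_coarsen`). Exponentiating the expansion of `log P_N`, the terms with `F ⊆ M` are constant on
such `u` and factor out of the sum, so
`log P_M(v) = ∑_{F ⊆ M} λ^N_F W_F(v) + g_v(Λ_{N|M})` with `g_v` a logarithm of a sum of
exponentials of linear forms, hence smooth (`log_marg_coarse`). Taking the Walsh coefficient at `E`
and using orthogonality (`walsh_orthogonal`) gives `λ^M_E = λ^N_E + 2^{-|V|} ∑_v g_v(Λ_{N|M}) W_E(v)`.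
-/

open Finset

variable {V : Type} [Fintype V] [DecidableEq V]

/-! ### Walsh functions and pulled-back marginals -/

/-- The sign of a binary category: `+1` at category 2 (encoded `1`) and `-1` at category 1. -/
def catSign (a : Fin 2) : ℝ := if a = 1 then 1 else -1

lemma catSign_mul (a b : Fin 2) : catSign a * catSign b = if a = b then 1 else -1 := by
  fin_cases a <;> fin_cases b <;> simp [catSign]

/-- The Walsh function of the effect `E`: the product of the signs of the coordinates in `E`. -/
def walsh {V : Type} (E : Finset V) (v : V → Fin 2) : ℝ := ∏ w ∈ E, catSign (v w)

/-- `u` and `v` agree on the variables in `M`. -/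
abbrev Agree {V : Type} (M : Finset V) (u v : V → Fin 2) : Prop := ∀ w ∈ M, u w = v w

/-- The marginal on `M`, pulled back to a function of all the variables. -/
noncomputable def marg (P : (V → Fin 2) → ℝ) (M : Finset V) (v : V → Fin 2) : ℝ :=
  marginal (fun _ => Fin 2) P M (fun w => v w.1)

lemma marg_eq (P : (V → Fin 2) → ℝ) (M : Finset V) (v : V → Fin 2) :
    marg P M v = ∑ u, if Agree M u v then P u else 0 := by
  unfold marg marginal
  refine Finset.sum_congr rfl fun u _ => ?_
  simp [Agree]

lemma walsh_one {V : Type} (E : Finset V) : walsh E (fun _ => 1) = 1 := by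
  simp [walsh, catSign]

lemma walsh_agree {V : Type} {M F : Finset V} (hF : F ⊆ M) {u v : V → Fin 2} (h : Agree M u v) :
    walsh F u = walsh F v :=
  Finset.prod_congr rfl fun w hw => by rw [h w (hF hw)]

lemma walsh_orthogonal (E F : Finset V) :
    ∑ v : V → Fin 2, walsh E v * walsh F v =
      if E = F then (2 : ℝ) ^ Fintype.card V else 0 := by
  have h1 : ∀ v : V → Fin 2, walsh E v * walsh F v =
      ∏ w, ((if w ∈ E then catSign (v w) else 1) * (if w ∈ F then catSign (v w) else 1)) := by
    intro v
    rw [Finset.prod_mul_distrib]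
    simp [walsh]
  simp_rw [h1]
  have h2 := Finset.prod_univ_sum (fun _ : V => (Finset.univ : Finset (Fin 2)))
    (fun w a => (if w ∈ E then catSign a else 1) * (if w ∈ F then catSign a else (1 : ℝ)))
  rw [Fintype.piFinset_univ] at h2
  rw [← h2]
  split_ifs with h
  · subst h
    have : ∀ w ∈ (Finset.univ : Finset V), (∑ a : Fin 2,
        (if w ∈ E then catSign a else 1) * (if w ∈ E then catSign a else (1 : ℝ))) = 2 := by
      intro w _
      by_cases hw : w ∈ E <;> simp [hw, catSign] <;> norm_num
    rw [Finset.prod_congr rfl this]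
    simp
  · obtain ⟨w, hw⟩ : ∃ w, ¬ (w ∈ E ↔ w ∈ F) := by
      by_contra hc
      push Not at hc
      exact h (Finset.ext hc)
    refine Finset.prod_eq_zero (Finset.mem_univ w) ?_
    by_cases h1 : w ∈ E <;> by_cases h2 : w ∈ F <;> simp_all [catSign]

/-! ### Log-linear parameters as Walsh coefficients -/

/-- The fibres of restriction to `M` all have `2 ^ (|V| - |M|)` elements. -/
lemma card_fiber (M : Finset V) (m : Cell (fun _ : V => Fin 2) M) :
    (Finset.univ.filter fun v : V → Fin 2 => (fun w : {x // x ∈ M} => v w.1) = m).card =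
      2 ^ (Fintype.card V - M.card) := by
  rw [← Fintype.card_subtype]
  have e : {v : V → Fin 2 // (fun w : {x // x ∈ M} => v w.1) = m} ≃ ({x // x ∉ M} → Fin 2) :=
    { toFun := fun v w => v.1 w.1
      invFun := fun g => ⟨fun w => if h : w ∈ M then m ⟨w, h⟩ else g ⟨w, h⟩, by
        funext w; simp⟩
      left_inv := by
        rintro ⟨v, rfl⟩
        ext w
        simp
      right_inv := by
        intro g
        ext w
        simp [w.2] }
  rw [Fintype.card_congr e]
  simp [Fintype.card_subtype_compl]

lemma sum_pullback (M : Finset V) (g : Cell (fun _ : V => Fin 2) M → ℝ) :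
    ∑ v : V → Fin 2, g (fun w => v w.1) = 2 ^ (Fintype.card V - M.card) * ∑ m, g m := by
  rw [← Finset.sum_fiberwise (s := Finset.univ)
    (g := fun v : V → Fin 2 => ((fun w => v w.1) : Cell (fun _ : V => Fin 2) M)), Finset.mul_sum]
  refine Finset.sum_congr rfl fun m _ => ?_
  rw [Finset.sum_congr rfl (g := fun _ => g m)
    (fun v hv => by rw [(Finset.mem_filter.mp hv).2])]
  rw [Finset.sum_const, card_fiber]
  simp

/-- The defining recursion of `mllp` at a cell `x` restricted to `E`, with the sums over cells of
`M` pulled back to all of `V → Fin 2`. -/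
lemma mllp_rec (P : (V → Fin 2) → ℝ) {M E : Finset V} (hE : E ⊆ M) (x : V → Fin 2) :
    ∑ F ∈ E.powerset, mllp (fun _ => Fin 2) P M F (fun w => x w.1) =
      ((2 : ℝ) ^ Fintype.card V)⁻¹ * ∑ v : V → Fin 2,
        (if Agree E v x then 2 ^ E.card * Real.log (marg P M v) else 0) := by
  rw [← Finset.add_sum_erase _ _ (Finset.mem_powerset_self E)]
  rw [mllp, Finset.sum_attach (E.powerset.erase E)
    (fun F => mllp (fun _ => Fin 2) P M F (fun w => x w.1)), sub_add_cancel]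
  have h := sum_pullback M (fun m => if ∀ (w : V) (hE : w ∈ E) (hM : w ∈ M), m ⟨w, hM⟩ = x w
       then 2 ^ E.card * Real.log (marginal (fun _ => Fin 2) P M m) else 0)
  have h' : (∑ v : V → Fin 2,
      (if Agree E v x then 2 ^ E.card * Real.log (marg P M v) else 0)) =
      2 ^ (Fintype.card V - M.card) * ∑ m : Cell (fun _ : V => Fin 2) M,
        (if ∀ (w : V) (hE : w ∈ E) (hM : w ∈ M), m ⟨w, hM⟩ = x w
       then 2 ^ E.card * Real.log (marginal (fun _ => Fin 2) P M m) else 0) := by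
    rw [← h]
    refine Finset.sum_congr rfl fun v _ => ?_
    refine if_congr ?_ rfl rfl
    exact ⟨fun h w hw _ => h w hw, fun h w hw => h w hw (hE hw)⟩
  rw [h']
  have h3 : ∀ m : Cell (fun _ : V => Fin 2) M,
      (if ∀ (w : V) (hE : w ∈ E) (hM : w ∈ M), m ⟨w, hM⟩ = x w
       then (2 : ℝ) ^ E.card * Real.log (marginal (fun _ => Fin 2) P M m) else 0) =
      2 ^ E.card * (if ∀ (w : V) (hE : w ∈ E) (hM : w ∈ M), m ⟨w, hM⟩ = x w
       then Real.log (marginal (fun _ => Fin 2) P M m) else 0) := by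
    intro m
    rw [mul_ite, mul_zero]
  simp_rw [h3]
  rw [← Finset.mul_sum, ← mul_assoc, ← mul_assoc]
  congr 1
  have hc1 : E.card ≤ M.card := Finset.card_le_card hE
  have hc2 : M.card ≤ Fintype.card V := Finset.card_le_univ M
  have hcard : Fintype.card (Cell (fun _ : V => Fin 2) (M \ E)) = 2 ^ (M.card - E.card) := by
    simp [Finset.card_sdiff_of_subset hE]
  rw [hcard]
  have hV : Fintype.card V = (Fintype.card V - M.card) + (M.card - E.card) + E.card := by omega
  push_cast
  conv_rhs => rw [hV]
  rw [show Fintype.card V - M.card + (M.card - E.card) + E.card - M.card =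
    Fintype.card V - M.card by omega, pow_add, pow_add]
  field_simp

lemma sum_walsh_mul (E : Finset V) (v x : V → Fin 2) :
    ∑ F ∈ E.powerset, walsh F v * walsh F x = if Agree E v x then (2 : ℝ) ^ E.card else 0 := by
  have h : ∀ F ∈ E.powerset, walsh F v * walsh F x = ∏ w ∈ F, (catSign (v w) * catSign (x w)) :=
    fun F _ => Finset.prod_mul_distrib.symm
  rw [Finset.sum_congr rfl h, ← Finset.prod_one_add]
  simp_rw [catSign_mul]
  split_ifs with hA
  · rw [Finset.prod_congr rfl (g := fun _ => (2 : ℝ))]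
    · simp
    · intro w hw
      rw [if_pos (hA w hw)]; norm_num
  · simp only [Agree] at hA
    push Not at hA
    obtain ⟨w, hw, hne⟩ := hA
    refine Finset.prod_eq_zero hw ?_
    rw [if_neg hne]; norm_num

/-- The parameters are the Walsh–Fourier coefficients of the log-marginal. -/
lemma mllp_closed (P : (V → Fin 2) → ℝ) {M : Finset V} (x : V → Fin 2) (E : Finset V)
    (hE : E ⊆ M) :
    mllp (fun _ => Fin 2) P M E (fun w => x w.1) =
      ((2 : ℝ) ^ Fintype.card V)⁻¹ *
        ∑ v : V → Fin 2, Real.log (marg P M v) * (walsh E v * walsh E x) := by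
  induction E using Finset.strongInduction with
  | H E ih =>
    have h := mllp_rec P hE x
    have h2 : ∑ F ∈ E.powerset, ((2 : ℝ) ^ Fintype.card V)⁻¹ *
        ∑ v : V → Fin 2, Real.log (marg P M v) * (walsh F v * walsh F x) =
        ((2 : ℝ) ^ Fintype.card V)⁻¹ * ∑ v : V → Fin 2,
        (if Agree E v x then 2 ^ E.card * Real.log (marg P M v) else 0) := by
      rw [← Finset.mul_sum, Finset.sum_comm]
      congr 1
      refine Finset.sum_congr rfl fun v _ => ?_
      rw [← Finset.mul_sum, sum_walsh_mul, mul_ite, mul_zero, mul_comm]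
    rw [← Finset.add_sum_erase _ _ (Finset.mem_powerset_self E)] at h h2
    have h3 : ∀ F ∈ E.powerset.erase E, mllp (fun _ => Fin 2) P M F (fun w => x w.1) =
        ((2 : ℝ) ^ Fintype.card V)⁻¹ *
        ∑ v : V → Fin 2, Real.log (marg P M v) * (walsh F v * walsh F x) := by
      intro F hF
      rw [Finset.mem_erase, Finset.mem_powerset] at hF
      exact ih F (hF.2.ssubset_of_ne hF.1) (hF.2.trans hE)
    rw [Finset.sum_congr rfl h3] at h
    linarith

lemma mllp_one (P : (V → Fin 2) → ℝ) {M E : Finset V} (hE : E ⊆ M) :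
    mllp (fun _ => Fin 2) P M E (fun _ => 1) =
      ((2 : ℝ) ^ Fintype.card V)⁻¹ * ∑ v : V → Fin 2, Real.log (marg P M v) * walsh E v := by
  rw [mllp_closed P (fun _ => 1) E hE]
  simp [walsh_one]

lemma mllp_sign (P : (V → Fin 2) → ℝ) {M E : Finset V} (hE : E ⊆ M) (x : V → Fin 2) :
    mllp (fun _ => Fin 2) P M E (fun w => x w.1) =
      mllp (fun _ => Fin 2) P M E (fun _ => 1) * walsh E x := by
  rw [mllp_closed P x E hE, mllp_one P hE, mul_assoc, Finset.sum_mul]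
  simp only [mul_assoc]

lemma marg_agree (P : (V → Fin 2) → ℝ) {M : Finset V} {u v : V → Fin 2} (h : Agree M u v) :
    marg P M u = marg P M v := by
  unfold marg
  congr 1
  funext w
  exact h w.1 w.2

lemma card_agree (M : Finset V) (x : V → Fin 2) :
    (∑ v : V → Fin 2, if Agree M v x then (1 : ℝ) else 0) = 2 ^ (Fintype.card V - M.card) := by
  rw [Finset.sum_boole]
  have h := card_fiber M (fun w => x w.1)
  have h' : ((Finset.univ.filter fun v : V → Fin 2 => Agree M v x).card : ℝ) =
      ((2 ^ (Fintype.card V - M.card) : ℕ) : ℝ) := by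
    rw [← h]
    congr 2
    ext v
    simp [funext_iff, Agree]
  rw [h']
  push_cast
  rfl

/-- Walsh expansion of the log-marginal. -/
lemma log_marg_expand (P : (V → Fin 2) → ℝ) (N : Finset V) (x : V → Fin 2) :
    Real.log (marg P N x) =
      ∑ F ∈ N.powerset, mllp (fun _ => Fin 2) P N F (fun _ => 1) * walsh F x := by
  have h := mllp_rec P (Finset.Subset.refl N) x
  rw [Finset.sum_congr rfl
    (fun F hF => mllp_sign P (Finset.mem_powerset.mp hF) x)] at h
  rw [h]
  have h1 : ∀ v : V → Fin 2,
      (if Agree N v x then (2 : ℝ) ^ N.card * Real.log (marg P N v) else 0) =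
      (2 : ℝ) ^ N.card * Real.log (marg P N x) * (if Agree N v x then 1 else 0) := by
    intro v
    split_ifs with hv
    · rw [marg_agree P hv, mul_one]
    · rw [mul_zero]
  simp_rw [h1]
  rw [← Finset.mul_sum, card_agree]
  have hc : Fintype.card V = N.card + (Fintype.card V - N.card) := by
    have := Finset.card_le_univ N
    omega
  conv_rhs => rw [hc, pow_add]
  rw [show N.card + (Fintype.card V - N.card) - N.card = Fintype.card V - N.card by omega]
  field_simp

/-! ### Passing to a smaller marginal -/

/-- Up to the size of the fibres of restriction to `N`, the marginal on `M ⊆ N` sums the marginal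
on `N`. -/
lemma marg_coarsen (P : (V → Fin 2) → ℝ) {M N : Finset V} (hMN : M ⊆ N) (x : V → Fin 2) :
    ∑ u : V → Fin 2, (if Agree M u x then marg P N u else 0) =
      2 ^ (Fintype.card V - N.card) * marg P M x := by
  rw [marg_eq P M x, Finset.mul_sum]
  have h : ∀ u : V → Fin 2, (if Agree M u x then marg P N u else 0) =
      ∑ t : V → Fin 2, (if Agree M t x then P t else 0) * (if Agree N u t then 1 else 0) := by
    intro u
    rw [marg_eq]
    split_ifs with hu
    · refine Finset.sum_congr rfl fun t _ => ?_
      by_cases ht : Agree N t u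
      · have h1 : Agree N u t := fun w hw => (ht w hw).symm
        have h2 : Agree M t x := fun w hw => (ht w (hMN hw)).trans (hu w hw)
        rw [if_pos ht, if_pos h1, if_pos h2, mul_one]
      · have h1 : ¬ Agree N u t := fun h => ht fun w hw => (h w hw).symm
        rw [if_neg ht, if_neg h1, mul_zero]
    · refine (Finset.sum_eq_zero fun t _ => ?_).symm
      by_cases ht : Agree N u t
      · have h2 : ¬ Agree M t x := fun h => hu fun w hw => (ht w (hMN hw)).trans (h w hw)
        rw [if_neg h2, zero_mul]
      · rw [if_neg ht, mul_zero]
  simp_rw [h]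
  rw [Finset.sum_comm]
  refine Finset.sum_congr rfl fun t _ => ?_
  rw [← Finset.mul_sum, card_agree, mul_comm]

lemma marg_pos (P : (V → Fin 2) → ℝ) (hP : ∀ v, 0 < P v) (M : Finset V) (x : V → Fin 2) :
    0 < marg P M x := by
  rw [marg_eq]
  refine Finset.sum_pos' (fun u _ => ?_) ⟨x, Finset.mem_univ x, ?_⟩
  · split_ifs
    · exact (hP u).le
    · exact le_rfl
  · rw [if_pos (fun _ _ => rfl)]
    exact hP x

/-- The sum over all `u` agreeing with `v` on `M` of the exponential of the part of the Walsh
expansion of `log P_N(u)` coming from the effects not contained in `M`. -/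
noncomputable def fiberSum (M N : Finset V) (v : V → Fin 2)
    (l : {F : Finset V // F ⊆ N ∧ ¬ F ⊆ M} → ℝ) : ℝ :=
  ∑ u : V → Fin 2, if Agree M u v then Real.exp (∑ F, l F * walsh F.1 u) else 0

lemma fiberSum_pos (M N : Finset V) (v : V → Fin 2)
    (l : {F : Finset V // F ⊆ N ∧ ¬ F ⊆ M} → ℝ) : 0 < fiberSum M N v l := by
  refine Finset.sum_pos' (fun u _ => ?_) ⟨v, Finset.mem_univ v, ?_⟩
  · split_ifs
    · exact (Real.exp_pos _).le
    · exact le_rfl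
  · rw [if_pos (fun _ _ => rfl)]
    exact Real.exp_pos _

lemma fiberSum_contDiff (M N : Finset V) (v : V → Fin 2) :
    ContDiff ℝ (⊤ : ℕ∞) (fiberSum M N v) := by
  unfold fiberSum
  refine ContDiff.sum fun u _ => ?_
  split_ifs
  · fun_prop
  · exact contDiff_const

/-- Splitting `log P_M` into the effects inside `M`, with their parameters in the marginal `N`, and
a function of the parameters of the remaining effects. -/
lemma log_marg_coarse (P : (V → Fin 2) → ℝ) (hP : ∀ v, 0 < P v) {M N : Finset V} (hMN : M ⊆ N)
    (v : V → Fin 2) :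
    Real.log (marg P M v) =
      ∑ F ∈ M.powerset, mllp (fun _ => Fin 2) P N F (fun _ => 1) * walsh F v +
      (Real.log (fiberSum M N v (fun F => mllp (fun _ => Fin 2) P N F.1 (fun _ => 1))) -
        Real.log (2 ^ (Fintype.card V - N.card))) := by
  have hsplit : ∀ u, ∑ F ∈ N.powerset, mllp (fun _ => Fin 2) P N F (fun _ => 1) * walsh F u =
      ∑ F ∈ M.powerset, mllp (fun _ => Fin 2) P N F (fun _ => 1) * walsh F u +
      ∑ F : {F : Finset V // F ⊆ N ∧ ¬ F ⊆ M},
        mllp (fun _ => Fin 2) P N F.1 (fun _ => 1) * walsh F.1 u := by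
    intro u
    rw [← Finset.sum_filter_add_sum_filter_not N.powerset (fun F => F ⊆ M)]
    congr 1
    · refine Finset.sum_congr ?_ fun _ _ => rfl
      ext F
      simp only [Finset.mem_filter, Finset.mem_powerset]
      exact ⟨fun h => h.2, fun h => ⟨h.trans hMN, h⟩⟩
    · exact Finset.sum_subtype _ (by simp)
        (fun F => mllp (fun _ => Fin 2) P N F (fun _ => 1) * walsh F u)
  have h := marg_coarsen P hMN v
  have hl : ∑ u : V → Fin 2, (if Agree M u v then marg P N u else 0) =
      Real.exp (∑ F ∈ M.powerset, mllp (fun _ => Fin 2) P N F (fun _ => 1) * walsh F v) *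
      fiberSum M N v (fun F => mllp (fun _ => Fin 2) P N F.1 (fun _ => 1)) := by
    rw [fiberSum, Finset.mul_sum]
    refine Finset.sum_congr rfl fun u _ => ?_
    split_ifs with hu
    · rw [← Real.exp_log (marg_pos P hP N u), log_marg_expand, hsplit, Real.exp_add]
      congr 2
      refine Finset.sum_congr rfl fun F hF => ?_
      rw [walsh_agree (Finset.mem_powerset.mp hF) hu]
    · rw [mul_zero]
  rw [hl] at h
  have h2 := congrArg Real.log h
  rw [Real.log_mul (Real.exp_ne_zero _) (fiberSum_pos M N v _).ne', Real.log_exp,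
    Real.log_mul (by positivity) (marg_pos P hP M v).ne'] at h2
  linarith

/-- (Binary variables.) For `E ⊆ M ⊊ N`, with `Λ_{N|M}` the vector of the
non-redundant values `λ^N_F` over the effects `F ⊆ N` with `F ⊄ M`, there is an infinitely
differentiable function `f` such that `λ^N_E(P) = λ^M_E(P) + f(Λ_{N|M}(P))` for every strictly
positive distribution `P`.  In the binary case `X v = {1,2}` (encoded as `Fin 2` with `1`
standing for category 2), and the non-redundant value of `λ^M_E` is its value at the all-2
cell. -/
theorem mllp_change_of_marginal
    {V : Type} [Fintype V] [DecidableEq V]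
    (M N E : Finset V) (hE : E.Nonempty) (hEM : E ⊆ M) (hMN : M ⊂ N) :
    ∃ f : ({F : Finset V // F ⊆ N ∧ ¬ F ⊆ M} → ℝ) → ℝ,
      ContDiff ℝ (⊤ : ℕ∞) f ∧
      ∀ P : (∀ _ : V, Fin 2) → ℝ, (∀ v, 0 < P v) → (∑ v, P v = 1) →
        mllp (fun _ => Fin 2) P N E (fun _ => 1) =
          mllp (fun _ => Fin 2) P M E (fun _ => 1) +
            f (fun F => mllp (fun _ => Fin 2) P N F.1 (fun _ => 1)) := by
  refine ⟨fun l => -(((2 : ℝ) ^ Fintype.card V)⁻¹ * ∑ v : V → Fin 2,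
    (Real.log (fiberSum M N v l) - Real.log (2 ^ (Fintype.card V - N.card))) * walsh E v),
    ?_, ?_⟩
  · refine (contDiff_const.mul (ContDiff.sum fun v _ => ?_)).neg
    exact (((fiberSum_contDiff M N v).log fun l => (fiberSum_pos M N v l).ne').sub
      contDiff_const).mul contDiff_const
  · intro P hP _
    rw [mllp_one P hEM]
    simp_rw [log_marg_coarse P hP hMN.1, add_mul]
    rw [Finset.sum_add_distrib, mul_add, add_neg_cancel_right]
    simp_rw [Finset.sum_mul, mul_assoc]
    rw [Finset.sum_comm]
    simp_rw [← Finset.mul_sum, walsh_orthogonal]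
    -- only the term `F = E` survives
    simp only [mul_ite, mul_zero, Finset.sum_ite_eq', Finset.mem_powerset, if_pos hEM]
    field_simp
end

section
/- Let A, B, C be three variables with finite category sets and let P be a strictly positive joint distribution on X_A × X_B × X_C satisfying the conditional independence A ⫫ B | C. Then for every cell b ∈ X_B, the log-linear parameter of the effect {B} computed in the full marginal {A,B,C} equals that computed in the marginal {B,C}: λ^{ABC}_B(b) = λ^{BC}_B(b). -/
/-!
Under `A ⫫ B | C` and positivity, `log P_{ABC}(a,b,c) = h(a,c) + log P_{BC}(b,c)` with
`h = log P_{AC} - log P_C`. A single-variable effect is a conditional mean minus the overall mean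
of the log-probabilities, i.e. `λ^M_B(b) = avg (log P_M | b) - avg (log P_M)`. The term `h` does not
depend on `b`, so it contributes the same amount to both averages and cancels; the term
`log P_{BC}` does not depend on `a`, so averaging over `a` leaves exactly `λ^{BC}_B(b)`.

`mllp_singleton` unfolds the recursion, `sum_cell_three` and `sum_cell_two` turn sums over cells
into iterated sums, and `log_marginal_split` is the decomposition above.
-/

open Finset

variable {V : Type} [Fintype V] [DecidableEq V]

/-- `P` satisfies the conditional independence `A ⫫ B | C`:
`P_{A∪B∪C}(a,b,c) · P_C(c) = P_{A∪C}(a,c) · P_{B∪C}(b,c)` for all cells. -/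
def CondIndep {V : Type} [Fintype V] [DecidableEq V]
    (X : V → Type) [∀ v, Fintype (X v)] [∀ v, DecidableEq (X v)]
    (P : (∀ v, X v) → ℝ) (A B C : Finset V) : Prop :=
  ∀ m : Cell X (A ∪ B ∪ C),
    marginal X P (A ∪ B ∪ C) m *
        marginal X P C (restrictCell Finset.subset_union_right m) =
      marginal X P (A ∪ C)
          (restrictCell (Finset.union_subset_union_left Finset.subset_union_left) m) *
        marginal X P (B ∪ C)
          (restrictCell (Finset.union_subset_union_left Finset.subset_union_right) m)

/-- The cell of `M` obtained by restricting a full assignment `v`. -/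
def restrictFull {V : Type} {X : V → Type} (v : ∀ i, X i) (M : Finset V) : Cell X M :=
  fun w => v w.1

/-- The full assignment with coordinates `a`, `b`, `c`. -/
def triple {X : Fin 3 → Type} (a : X 0) (b : X 1) (c : X 2) : ∀ i, X i
  | 0 => a
  | 1 => b
  | 2 => c

lemma mllp_empty (X : V → Type) [∀ v, Fintype (X v)] [∀ v, DecidableEq (X v)]
    (P : (∀ v, X v) → ℝ) (M : Finset V) (e : Cell X (∅ : Finset V)) :
    mllp X P M ∅ e =
      (∏ i ∈ M, (Fintype.card (X i) : ℝ))⁻¹ * ∑ m : Cell X M, Real.log (marginal X P M m) := by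
  have hc : (Fintype.card (Cell X (M \ ∅)) : ℝ) = ∏ i ∈ M, (Fintype.card (X i) : ℝ) := by
    rw [Finset.sdiff_empty, Fintype.card_pi, Nat.cast_prod]
    exact Finset.prod_coe_sort M (fun i => (Fintype.card (X i) : ℝ))
  have hF : ∀ F ∈ ((∅ : Finset V).powerset.erase ∅).attach,
      mllp X P M F.1
        (fun w => e ⟨w.1, Finset.mem_powerset.mp (Finset.mem_of_mem_erase F.2) w.2⟩) = 0 := by
    rintro ⟨F, hF⟩ -
    simp at hF
  rw [mllp, hc, Finset.sum_eq_zero hF, sub_zero]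
  simp

/-- A single-variable effect is a conditional mean minus the overall mean. -/
lemma mllp_singleton (X : V → Type) [∀ v, Fintype (X v)] [∀ v, DecidableEq (X v)]
    (P : (∀ v, X v) → ℝ) (M : Finset V) (j : V) (hj : j ∈ M) (e : Cell X {j}) :
    mllp X P M {j} e =
      (∏ i ∈ M \ {j}, (Fintype.card (X i) : ℝ))⁻¹ *
        (∑ m : Cell X M, if m ⟨j, hj⟩ = e ⟨j, Finset.mem_singleton_self j⟩
          then Real.log (marginal X P M m) else 0) -
      (∏ i ∈ M, (Fintype.card (X i) : ℝ))⁻¹ * ∑ m : Cell X M, Real.log (marginal X P M m) := by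
  have hc : (Fintype.card (Cell X (M \ {j})) : ℝ) =
      ∏ i ∈ M \ {j}, (Fintype.card (X i) : ℝ) := by
    rw [Fintype.card_pi, Nat.cast_prod]
    exact Finset.prod_coe_sort (M \ {j}) (fun i => (Fintype.card (X i) : ℝ))
  have hp : (({j} : Finset V).powerset.erase {j}) = {∅} := by
    ext F
    simp only [Finset.mem_erase, Finset.mem_powerset, Finset.subset_singleton_iff,
      Finset.mem_singleton]
    constructor
    · tauto
    · rintro rfl
      exact ⟨(Finset.singleton_ne_empty j).symm, Or.inl rfl⟩
  have hF : ∀ F ∈ (({j} : Finset V).powerset.erase {j}).attach,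
      mllp X P M F.1
        (fun w => e ⟨w.1, Finset.mem_powerset.mp (Finset.mem_of_mem_erase F.2) w.2⟩) =
      (∏ i ∈ M, (Fintype.card (X i) : ℝ))⁻¹ * ∑ m : Cell X M, Real.log (marginal X P M m) := by
    rintro ⟨F, hF⟩ -
    obtain rfl : F = ∅ := by rw [hp] at hF; exact Finset.mem_singleton.mp hF
    exact mllp_empty X P M _
  rw [mllp, hc, Finset.sum_congr rfl hF, Finset.sum_const, Finset.card_attach, hp,
    Finset.card_singleton, one_smul]
  congr 2
  refine Finset.sum_congr rfl fun m _ => ?_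
  refine if_congr ⟨fun h => h j (Finset.mem_singleton_self j) hj, ?_⟩ rfl rfl
  intro h w hE hM
  obtain rfl := Finset.mem_singleton.mp hE
  exact h

lemma sum_cell_three (X : Fin 3 → Type) [∀ v, Fintype (X v)]
    (f : Cell X ({0, 1, 2} : Finset (Fin 3)) → ℝ) :
    ∑ m, f m = ∑ b, ∑ a, ∑ c, f (restrictFull (triple a b c) _) := by
  let φ : X 1 × X 0 × X 2 ≃ Cell X ({0, 1, 2} : Finset (Fin 3)) :=
    { toFun := fun x => restrictFull (triple x.2.1 x.1 x.2.2) _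
      invFun := fun m => (m ⟨1, by decide⟩, m ⟨0, by decide⟩, m ⟨2, by decide⟩)
      left_inv := fun _ => rfl
      right_inv := by
        intro m
        funext ⟨i, hi⟩
        fin_cases i <;> rfl }
  rw [← φ.sum_comp, Fintype.sum_prod_type]
  refine Finset.sum_congr rfl fun b _ => ?_
  rw [Fintype.sum_prod_type]
  rfl

/-- The coordinate `a` is irrelevant and only serves to form a full assignment. -/
lemma sum_cell_two (X : Fin 3 → Type) [∀ v, Fintype (X v)] (a : X 0)
    (f : Cell X ({1, 2} : Finset (Fin 3)) → ℝ) :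
    ∑ m, f m = ∑ b, ∑ c, f (restrictFull (triple a b c) _) := by
  let φ : X 1 × X 2 ≃ Cell X ({1, 2} : Finset (Fin 3)) :=
    { toFun := fun x => restrictFull (triple a x.1 x.2) _
      invFun := fun m => (m ⟨1, by decide⟩, m ⟨2, by decide⟩)
      left_inv := fun _ => rfl
      right_inv := by
        intro m
        funext ⟨i, hi⟩
        fin_cases i
        · exact absurd hi (by decide)
        · rfl
        · rfl }
  rw [← φ.sum_comp, Fintype.sum_prod_type]
  rfl

lemma marginal_restrictFull_pos (X : V → Type) [∀ v, Fintype (X v)] [∀ v, DecidableEq (X v)]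
    (P : (∀ v, X v) → ℝ) (hP : ∀ v, 0 < P v) (M : Finset V) (v : ∀ i, X i) :
    0 < marginal X P M (restrictFull v M) := by
  refine Finset.sum_pos' (fun u _ => ?_) ⟨v, Finset.mem_univ v, ?_⟩
  · split_ifs
    exacts [(hP u).le, le_rfl]
  · have hv : ∀ w : {x // x ∈ M}, v w.1 = restrictFull v M w := fun _ => rfl
    rw [if_pos hv]
    exact hP v

lemma log_marginal_split (X : Fin 3 → Type) [∀ v, Fintype (X v)] [∀ v, DecidableEq (X v)]
    (P : (∀ v, X v) → ℝ) (hP : ∀ v, 0 < P v) (hCI : CondIndep X P {0} {1} {2})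
    (v : ∀ i, X i) :
    Real.log (marginal X P {0, 1, 2} (restrictFull v _)) =
      (Real.log (marginal X P {0, 2} (restrictFull v _)) -
        Real.log (marginal X P {2} (restrictFull v _))) +
      Real.log (marginal X P {1, 2} (restrictFull v _)) := by
  have key : marginal X P ({0} ∪ {1} ∪ {2}) (restrictFull v _) *
        marginal X P {2} (restrictFull v _) =
      marginal X P ({0} ∪ {2}) (restrictFull v _) *
        marginal X P ({1} ∪ {2}) (restrictFull v _) :=
    hCI (restrictFull v _)
  rw [show ({0} ∪ {1} ∪ {2} : Finset (Fin 3)) = {0, 1, 2} by decide,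
    show ({0} ∪ {2} : Finset (Fin 3)) = {0, 2} by decide,
    show ({1} ∪ {2} : Finset (Fin 3)) = {1, 2} by decide] at key
  have pos := fun M => (marginal_restrictFull_pos X P hP M v).ne'
  have hlog := congrArg Real.log key
  rw [Real.log_mul (pos _) (pos _), Real.log_mul (pos _) (pos _)] at hlog
  linarith

/-- For three variables `A, B, C` (indices `0, 1, 2`) with finite category
sets and a strictly positive joint distribution satisfying `A ⫫ B | C`, for every cell `b` of
`B`, the log-linear parameter of the effect `{B}` computed in the full marginal `{A,B,C}`
equals that computed in the marginal `{B,C}`: `λ^{ABC}_B(b) = λ^{BC}_B(b)`. -/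
theorem mllp_single_effect_eq_of_condIndep
    (X : Fin 3 → Type) [∀ v, Fintype (X v)] [∀ v, DecidableEq (X v)]
    (hX : ∀ v, 2 ≤ Fintype.card (X v))
    (P : (∀ v, X v) → ℝ) (hPpos : ∀ v, 0 < P v) (hPsum : ∑ v, P v = 1)
    (hCI : CondIndep X P {0} {1} {2}) :
    ∀ e : Cell X {1},
      mllp X P ({0, 1, 2} : Finset (Fin 3)) {1} e =
        mllp X P ({1, 2} : Finset (Fin 3)) {1} e := by
  intro e
  have hne : ∀ i, Nonempty (X i) := fun i => Fintype.card_pos_iff.mp (by have := hX i; omega)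
  obtain ⟨a₀⟩ := hne 0
  set b₀ : X 1 := e ⟨1, Finset.mem_singleton_self 1⟩ with hb₀
  have hcard : ∀ i, (Fintype.card (X i) : ℝ) ≠ 0 := fun i => by
    have := hX i
    exact_mod_cast (by omega : Fintype.card (X i) ≠ 0)
  let K : X 1 → X 2 → ℝ := fun b c =>
    Real.log (marginal X P {1, 2} (restrictFull (triple a₀ b c) _))
  let h : X 0 → X 2 → ℝ := fun a c =>
    Real.log (marginal X P {0, 2} (restrictFull (triple a b₀ c) _)) -
      Real.log (marginal X P {2} (restrictFull (triple a b₀ c) _))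
  have hL : ∀ a b c, Real.log (marginal X P {0, 1, 2} (restrictFull (triple a b c) _)) =
      h a c + K b c := by
    intro a b c
    have h02 : restrictFull (triple a b c) ({0, 2} : Finset (Fin 3)) =
        restrictFull (triple a b₀ c) _ := by
      funext ⟨i, hi⟩
      fin_cases i
      · rfl
      · exact absurd hi (by decide)
      · rfl
    have h2 : restrictFull (triple a b c) ({2} : Finset (Fin 3)) =
        restrictFull (triple a b₀ c) _ := by
      funext ⟨i, hi⟩
      obtain rfl := Finset.mem_singleton.mp hi
      rfl
    have h12 : restrictFull (triple a b c) ({1, 2} : Finset (Fin 3)) =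
        restrictFull (triple a₀ b c) _ := by
      funext ⟨i, hi⟩
      fin_cases i
      · exact absurd hi (by decide)
      · rfl
      · rfl
    rw [log_marginal_split X P hPpos hCI, h02, h2, h12]
  rw [mllp_singleton X P _ 1 (by decide), mllp_singleton X P _ 1 (by decide),
    sum_cell_three, sum_cell_three, sum_cell_two X a₀, sum_cell_two X a₀,
    show ({0, 1, 2} \ {1} : Finset (Fin 3)) = {0, 2} by decide,
    show ({1, 2} \ {1} : Finset (Fin 3)) = {2} by decide,
    Finset.prod_insert (by decide), Finset.prod_insert (by decide),
    Finset.prod_insert (by decide), Finset.prod_singleton]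
  have hsel : ∀ a b c (M : Finset (Fin 3)) (h1 : (1 : Fin 3) ∈ M),
      restrictFull (triple (X := X) a b c) M ⟨1, h1⟩ = b := fun _ _ _ _ _ => rfl
  simp only [hsel, hL, ← hb₀]
  change _ * _ - _ = _ * (∑ b, ∑ c, if b = b₀ then K b c else 0) - _ * ∑ b, ∑ c, K b c
  have pull : ∀ (b : X 1) (f : X 2 → ℝ),
      (∑ c, if b = b₀ then f c else 0) = if b = b₀ then ∑ c, f c else 0 := by
    intro b f
    split_ifs <;> simp
  have pull' : ∀ (b : X 1) (f : X 0 → ℝ),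
      (∑ c, if b = b₀ then f c else 0) = if b = b₀ then ∑ c, f c else 0 := by
    intro b f
    split_ifs <;> simp
  simp only [pull, pull', Finset.sum_ite_eq', Finset.mem_univ, if_true, Finset.sum_add_distrib,
    Finset.sum_const, Finset.card_univ, nsmul_eq_mul, ← Finset.mul_sum]
  have h0 := hcard 0
  have h1 := hcard 1
  have h2 := hcard 2
  field_simp
  ring
end
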